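/- Let E = EuclideanSpace ℝ (Fin N), let d ∈ ℕ, and let f : E → ℝ be C^∞ with iteratedFDeriv ℝ κ f x = 0 for all κ > d and all x ∈ E. Define the Taylor-series flux g : E × E → E by requiring, for all x, Δ, e ∈ E, that ⟪g(x,Δ), e⟫ = Σ_{κ=1}^{d} (1/κ!) (iteratedFDeriv ℝ κ f x) applied to (κ−1) copies of Δ followed by e. Then for all x, Δ ∈ E the exact discrete energy identity ⟪g(x,Δ), Δ⟫ = f(x + Δ) − f(x) holds. -/

import Mathlib

/-!
For fixed `x` and `Δ` consider `F t = Σ_{κ ≤ d} (1 - t)^κ / κ! · D^κf(x + tΔ)[Δ,…,Δ]`, the Taylor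
polynomial of `f` based at `x + tΔ` and evaluated at `x + Δ`. Differentiating in the base point, the
sum telescopes to `dF/dt = (1 - t)^d / d! · D^(d+1)f(x + tΔ)[Δ,…,Δ]`
(`hasDerivAt_taylorPolynomial_basePoint`), which vanishes since `f` has degree at most `d`. Hence
`F 0 = F 1 = f (x + Δ)`, while `F 0 = f x + ⟪g x Δ, Δ⟫`, because for `e = Δ` every slot of the
multilinear forms defining `g` holds `Δ`.
-/

open RealInnerProductSpace

section

variable {E : Type*} [NormedAddCommGroup E] [NormedSpace ℝ E]

lemma hasDerivAt_iteratedFDeriv_line {f : E → ℝ} (hf : ContDiff ℝ (⊤ : ℕ∞) f)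
    (x Δ : E) (n : ℕ) (t : ℝ) :
    HasDerivAt (fun s : ℝ => iteratedFDeriv ℝ n f (x + s • Δ) (fun _ => Δ))
      (iteratedFDeriv ℝ (n + 1) f (x + t • Δ) (fun _ => Δ)) t := by
  have hdiff : Differentiable ℝ (iteratedFDeriv ℝ n f) :=
    hf.differentiable_iteratedFDeriv (by exact_mod_cast WithTop.coe_lt_top n)
  have hline : HasDerivAt (fun s : ℝ => x + s • Δ) Δ t := by
    simpa using ((hasDerivAt_id t).smul_const Δ).const_add x
  have hcomp := (hdiff (x + t • Δ)).hasFDerivAt.comp_hasDerivAt t hline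
  exact ((ContinuousMultilinearMap.apply ℝ (fun _ : Fin n => E) ℝ
    (fun _ => Δ)).hasFDerivAt.comp_hasDerivAt t hcomp)

/-- Derivative of the Taylor polynomial with respect to its base point, along a line: all terms
cancel except the one of highest order. -/
lemma hasDerivAt_taylorPolynomial_basePoint {f : E → ℝ} (hf : ContDiff ℝ (⊤ : ℕ∞) f)
    (x Δ : E) (n : ℕ) (t : ℝ) :
    HasDerivAt (fun s : ℝ => ∑ κ ∈ Finset.range (n + 1), (κ.factorial : ℝ)⁻¹ * (1 - s) ^ κ *
        iteratedFDeriv ℝ κ f (x + s • Δ) (fun _ => Δ))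
      ((n.factorial : ℝ)⁻¹ * (1 - t) ^ n *
        iteratedFDeriv ℝ (n + 1) f (x + t • Δ) (fun _ => Δ)) t := by
  induction n with
  | zero => simpa using hasDerivAt_iteratedFDeriv_line hf x Δ 0 t
  | succ n ih =>
    simp only [Finset.sum_range_succ _ (n + 1)]
    have hpow : HasDerivAt (fun s : ℝ => (((n + 1).factorial : ℕ) : ℝ)⁻¹ * (1 - s) ^ (n + 1))
        (-((n.factorial : ℝ)⁻¹ * (1 - t) ^ n)) t := by
      refine ((((hasDerivAt_id t).const_sub 1).pow (n + 1)).const_mul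
        (((n + 1).factorial : ℕ) : ℝ)⁻¹).congr_deriv ?_
      have h1 : (n.factorial : ℝ) ≠ 0 := by positivity
      have h2 : (n + 1 : ℝ) ≠ 0 := by positivity
      simp only [Nat.factorial_succ, id, Nat.add_sub_cancel]
      push_cast
      field_simp
    refine (ih.add (hpow.mul (hasDerivAt_iteratedFDeriv_line hf x Δ (n + 1) t))).congr_deriv ?_
    ring

end

/-- Exact discrete energy identity for the Taylor-series flux of a polynomial free
energy density: if all derivatives of `f` of order greater than `d` vanish and
`⟪g(x,Δ), e⟫ = Σ_{κ=1}^{d} (1/κ!) D^κf(x)[Δ,…,Δ,e]`, then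
`⟪g(x,Δ), Δ⟫ = f(x + Δ) − f(x)`. -/
theorem taylorFlux_exact_energy_identity (N d : ℕ)
    (f : EuclideanSpace ℝ (Fin N) → ℝ) (hf : ContDiff ℝ (⊤ : ℕ∞) f)
    (hpoly : ∀ κ : ℕ, d < κ → ∀ x : EuclideanSpace ℝ (Fin N), iteratedFDeriv ℝ κ f x = 0)
    (g : EuclideanSpace ℝ (Fin N) → EuclideanSpace ℝ (Fin N) → EuclideanSpace ℝ (Fin N))
    (hg : ∀ x Δ e : EuclideanSpace ℝ (Fin N), ⟪g x Δ, e⟫ =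
      ∑ κ ∈ Finset.Icc 1 d, (κ.factorial : ℝ)⁻¹ *
        (iteratedFDeriv ℝ κ f x) (fun i : Fin κ => if (i : ℕ) + 1 = κ then e else Δ)) :
    ∀ x Δ : EuclideanSpace ℝ (Fin N), ⟪g x Δ, Δ⟫ = f (x + Δ) - f x := by
  intro x Δ
  have hF := hasDerivAt_taylorPolynomial_basePoint hf x Δ d
  have hconst := is_const_of_deriv_eq_zero (fun t => (hF t).differentiableAt)
    (fun t => by rw [(hF t).deriv, hpoly (d + 1) d.lt_succ_self]; simp) 0 1
  have hIcc : Finset.Icc 1 d = Finset.Ico 1 (d + 1) := by ext; simp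
  rw [hg, hIcc]
  simp only [Finset.range_eq_Ico, Finset.sum_eq_sum_Ico_succ_bot d.succ_pos] at hconst
  -- At `t = 1` every summand of positive order carries a factor `0 ^ κ`.
  have hone : ∑ κ ∈ Finset.Ico (0 + 1) (d + 1), (κ.factorial : ℝ)⁻¹ * (1 - 1) ^ κ *
      iteratedFDeriv ℝ κ f (x + (1 : ℝ) • Δ) (fun _ => Δ) = 0 := by
    refine Finset.sum_eq_zero fun κ hκ => ?_
    have hκ0 : κ ≠ 0 := by simp at hκ; omega
    simp [hκ0]
  rw [hone] at hconst
  simp at hconst ⊢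
  linarith
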